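/- Let M ∈ M_n(Z_p) and let ν_1 < ν_2 < ... < ν_r be the distinct p-adic valuations of the eigenvalues of M (in an algebraic closure of Q_p). Then there exists U ∈ GL_n(Z_p) such that U M U⁻¹ is block upper triangular with r diagonal blocks, the j-th block having exactly the eigenvalues of M of valuation ν_j as its eigenvalues. -/

import Mathlib

open Matrix Polynomial

/-- The ring hom `ℤ_[p] → AlgebraicClosure ℚ_[p]`. -/
noncomputable def padicToAlgClosure (p : ℕ) [Fact p.Prime] :
    ℤ_[p] →+* AlgebraicClosure ℚ_[p] :=
  (algebraMap ℚ_[p] (AlgebraicClosure ℚ_[p])).comp PadicInt.Coe.ringHom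

/-- The canonical extension of the `p`-adic absolute value to an algebraic element `x` of
the algebraic closure of `ℚ_p`: `|x| = |N(x)|^{1/deg}`, computed from the constant
coefficient of the minimal polynomial. -/
noncomputable def algAbs (p : ℕ) [Fact p.Prime] (x : AlgebraicClosure ℚ_[p]) : ℝ :=
  ‖(minpoly ℚ_[p] x).coeff 0‖ ^ ((1 : ℝ) / (minpoly ℚ_[p] x).natDegree)

/-!
Conjugate eigenvalues have the same valuation, so for each slope `ν_j` the product `Q_j` of the
minimal polynomials over `ℤ_p` of the eigenvalues of that valuation has no roots of any other
valuation. By Cayley-Hamilton `M` is annihilated by `∏ j, Q_j`. For the first slope `j`, the kernel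
`W` of `Q_j(M)` is a saturated invariant sublattice, because the quotient by it embeds into the free
module `ℤ_p^n`; on `W` the matrix `M` is annihilated by `Q_j`, and on the quotient by the product of
the remaining `Q_i`. Bases of `W` and of the quotient fit together, and induction on the number of
slopes yields a block triangular form whose `j`-th diagonal block is annihilated by `Q_j`.
-/

section SlopeFactorization

theorem le_sum_filter {α κ : Type*} [Fintype κ] (s : Multiset α) (p : κ → α → Prop)
    [∀ j, DecidablePred (p j)] (h : ∀ x ∈ s, ∃ j, p j x) : s ≤ ∑ j, s.filter (p j) := by
  classical
  refine Multiset.le_iff_count.2 fun x => ?_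
  by_cases hx : x ∈ s
  · obtain ⟨j, hj⟩ := h x hx
    calc s.count x = (s.filter (p j)).count x := (Multiset.count_filter_of_pos hj).symm
      _ ≤ (∑ j, s.filter (p j)).count x := Multiset.count_le_of_le x <|
          Finset.single_le_sum_of_canonicallyOrdered (f := fun j => s.filter (p j))
            (Finset.mem_univ j)
  · rw [Multiset.count_eq_zero_of_notMem hx]
    exact Nat.zero_le _

variable {R K L β κ : Type*} [CommRing R] [CommRing L] [IsDomain L] [Algebra R L]

theorem finite_of_forall_exists_isRoot {P : L[X]} (hP : P ≠ 0) {a : L → β} {c : κ → β}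
    (hc : Function.Injective c) (hocc : ∀ j, ∃ x, P.IsRoot x ∧ a x = c j) : Finite κ := by
  have : Finite {x // P.IsRoot x} := finite_setOfPred_isRoot hP
  choose x hx hxc using hocc
  exact .of_injective (fun j => (⟨x j, hx j⟩ : {x // P.IsRoot x})) fun i j hij =>
    hc (by rw [← hxc i, ← hxc j, Subtype.mk.inj hij])

theorem dvd_prod_minpoly_roots {P : R[X]} (hP : P.Monic)
    (hinj : Function.Injective (algebraMap R L)) (hsplits : (P.map (algebraMap R L)).Splits) :
    P ∣ ((P.map (algebraMap R L)).roots.map (minpoly R)).prod := by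
  refine (map_dvd_map (algebraMap R L) hinj hP).1 ?_
  calc P.map (algebraMap R L) = ((P.map (algebraMap R L)).roots.map fun x => X - C x).prod :=
        hsplits.eq_prod_roots_of_monic (hP.map _)
    _ ∣ ((P.map (algebraMap R L)).roots.map fun x => (minpoly R x).map (algebraMap R L)).prod :=
        Multiset.prod_dvd_prod_of_dvd _ _ fun x _ =>
          dvd_iff_isRoot.2 (by rw [IsRoot, eval_map_algebraMap, minpoly.aeval])
    _ = (((P.map (algebraMap R L)).roots.map (minpoly R)).prod).map (algebraMap R L) := by
        rw [Polynomial.map_multiset_prod, Multiset.map_map]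
        rfl

variable [IsDomain R] [IsIntegrallyClosed R] [Field K] [Algebra R K] [IsFractionRing R K]
  [Algebra K L] [IsScalarTower R K L]

theorem isConjRoot_of_isRoot_map_minpoly {x y : L} (hx : IsIntegral R x)
    (hy : ((minpoly R x).map (algebraMap R L)).IsRoot y) : IsConjRoot K x y := by
  refine isConjRoot_of_aeval_eq_zero hx.tower_top ?_
  rw [minpoly.isIntegrallyClosed_eq_field_fractions' K hx, aeval_map_algebraMap,
    ← eval_map_algebraMap]
  exact hy

theorem exists_dvd_prod_of_isConjRoot_invariant [Fintype κ] {P : R[X]} (hP : P.Monic)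
    (hsplits : (P.map (algebraMap R L)).Splits) {a : L → β}
    (ha : ∀ x y, IsConjRoot K x y → a x = a y) {c : κ → β}
    (hc : ∀ x, (P.map (algebraMap R L)).IsRoot x → ∃ j, a x = c j) :
    ∃ Q : κ → R[X], P ∣ ∏ j, Q j ∧
      ∀ j x, ((Q j).map (algebraMap R L)).IsRoot x → a x = c j := by
  classical
  have hinj : Function.Injective (algebraMap R L) := by
    rw [IsScalarTower.algebraMap_eq R K L]
    exact (algebraMap K L).injective.comp (IsFractionRing.injective R K)
  set s := (P.map (algebraMap R L)).roots
  have hroot {x : L} (hx : x ∈ s) : (P.map (algebraMap R L)).IsRoot x := isRoot_of_mem_roots hx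
  refine ⟨fun j => ((s.filter (a · = c j)).map (minpoly R)).prod, ?_, fun j y hy => ?_⟩
  · have hcover : s ≤ ∑ j, s.filter (a · = c j) :=
      le_sum_filter s (fun j x => a x = c j) fun x hx => hc x (hroot hx)
    calc P ∣ (s.map (minpoly R)).prod := dvd_prod_minpoly_roots hP hinj hsplits
      _ ∣ ((∑ j, s.filter (a · = c j)).map (minpoly R)).prod :=
        Multiset.prod_dvd_prod_of_le (Multiset.map_le_map hcover)
      _ = ∏ j, ((s.filter (a · = c j)).map (minpoly R)).prod := by
        rw [← Multiset.coe_mapAddMonoidHom, map_sum, Multiset.prod_sum]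
  · rw [Polynomial.map_multiset_prod, Multiset.map_map, IsRoot, eval_multiset_prod,
      Multiset.prod_eq_zero_iff, Multiset.map_map, Multiset.mem_map] at hy
    obtain ⟨x, hx, hyx⟩ := hy
    obtain ⟨hxs, hxj⟩ := Multiset.mem_filter.1 hx
    have hint : IsIntegral R x := ⟨P, hP, by rw [← eval_map]; exact hroot hxs⟩
    rw [← ha x y (isConjRoot_of_isRoot_map_minpoly hint hyx), hxj]

end SlopeFactorization

section Matrix

variable {R ι κ : Type*} [CommRing R] [Fintype ι] [LinearOrder κ]

theorem toSquareBlock_mul {A B : Matrix ι ι R} {k : ι → κ} (hA : A.BlockTriangular k)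
    (hB : B.BlockTriangular k) (j : κ) :
    (A * B).toSquareBlock k j = A.toSquareBlock k j * B.toSquareBlock k j := by
  ext ⟨i, hi⟩ ⟨i', hi'⟩
  simp only [toSquareBlock_def, of_apply, Matrix.mul_apply]
  refine (Fintype.sum_of_injective Subtype.val Subtype.val_injective _ _ (fun i'' hne => ?_)
    fun _ => rfl).symm
  have hj : k i'' ≠ j := fun hj => hne ⟨⟨i'', hj⟩, rfl⟩
  rcases lt_or_gt_of_ne hj with hlt | hgt
  · rw [hA (hi ▸ hlt), zero_mul]
  · rw [hB (hi' ▸ hgt), mul_zero]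

variable [DecidableEq ι]

/-- Passing to the diagonal block labelled `j`, as an algebra homomorphism. It transports
polynomial identities to the diagonal blocks. -/
def toSquareBlockAlgHom (k : ι → κ) (j : κ) :
    blockTriangularSubalgebra R R k →ₐ[R] Matrix {i // k i = j} {i // k i = j} R :=
  AlgHom.ofLinearMap
    { toFun A := A.1.toSquareBlock k j
      map_add' _ _ := rfl
      map_smul' _ _ := rfl }
    (by ext i i'; simp [toSquareBlock_def, one_apply, Subtype.ext_iff])
    fun A B => toSquareBlock_mul A.2 B.2 j

theorem aeval_toSquareBlock {A : Matrix ι ι R} {k : ι → κ} (hA : A.BlockTriangular k)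
    (P : R[X]) (j : κ) : aeval (A.toSquareBlock k j) P = (aeval A P).toSquareBlock k j := by
  let A' : blockTriangularSubalgebra R R k := ⟨A, hA⟩
  calc aeval (A.toSquareBlock k j) P = toSquareBlockAlgHom k j (aeval A' P) :=
        aeval_algHom_apply (toSquareBlockAlgHom k j) A' P
    _ = (aeval A P).toSquareBlock k j := congrArg (toSquareBlock · k j)
        (aeval_algHom_apply (blockTriangularSubalgebra R R k).val A' P).symm

variable {L : Type*} [CommRing L] [IsDomain L]

theorem isRoot_map_of_aeval_eq_zero (φ : R →+* L) {A : Matrix ι ι R} {P : R[X]}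
    (hP : aeval A P = 0) {x : L} (hx : (A.charpoly.map φ).IsRoot x) : (P.map φ).IsRoot x := by
  have hPφ : aeval (toLin' (A.map φ)) (P.map φ) = 0 := by
    have hφ : (algebraMap L (Matrix ι ι L)).comp φ =
        φ.mapMatrix.comp (algebraMap R (Matrix ι ι R)) := by
      ext r i j
      simp [algebraMap_matrix_apply, apply_ite φ]
    have hmap : aeval (A.map φ) (P.map φ) = 0 := by
      have h := Polynomial.map_aeval_eq_aeval_map hφ P A
      rwa [hP, map_zero, RingHom.mapMatrix_apply, eq_comm] at h
    exact (aeval_algHom_apply (toLinAlgEquiv' (R := L) (n := ι)) (A.map φ) (P.map φ)).trans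
      (by rw [hmap, map_zero])
  rw [← charpoly_map, ← charpoly_toLin', ← Module.End.hasEigenvalue_iff_isRoot_charpoly] at hx
  obtain ⟨w, hw⟩ := hx.exists_hasEigenvector
  have h := Module.End.aeval_apply_of_hasEigenvector hw (p := P.map φ)
  rw [hPφ, LinearMap.zero_apply, eq_comm, smul_eq_zero_iff_left hw.2] at h
  exact h

theorem exists_isRoot_charpoly_toSquareBlock (φ : R →+* L) {A : Matrix ι ι R} {k : ι → κ}
    (hA : A.BlockTriangular k) {x : L} (hx : (A.charpoly.map φ).IsRoot x) :
    ∃ i, ((A.toSquareBlock k (k i)).charpoly.map φ).IsRoot x := by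
  rw [hA.charpoly, Polynomial.map_prod, isRoot_prod] at hx
  obtain ⟨_, hj, hx⟩ := hx
  obtain ⟨i, -, rfl⟩ := Finset.mem_image.1 hj
  exact ⟨i, hx⟩

theorem isUnit_toMatrix_basisFun (b : Module.Basis ι R (ι → R)) :
    IsUnit (b.toMatrix (Pi.basisFun R ι)) := by
  have := b.invertibleToMatrix (Pi.basisFun R ι)
  exact isUnit_of_invertible _

theorem toMatrix_basisFun_mul_mul_inv (b : Module.Basis ι R (ι → R)) (M : Matrix ι ι R) :
    b.toMatrix (Pi.basisFun R ι) * M * (b.toMatrix (Pi.basisFun R ι))⁻¹ =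
      LinearMap.toMatrix b b (toLin' M) := by
  rw [Matrix.inv_eq_right_inv (b.toMatrix_mul_toMatrix_flip (Pi.basisFun R ι)),
    ← basis_toMatrix_mul_linearMap_toMatrix_mul_basis_toMatrix b (Pi.basisFun R ι) b
      (Pi.basisFun R ι) (toLin' M)]
  congr
  exact (LinearMap.toMatrix'_toLin' M).symm

end Matrix

section Quotient

variable {R V V' : Type*} [CommRing R] [AddCommGroup V] [Module R V] [AddCommGroup V'] [Module R V']

theorem comp_aeval_of_comp_eq {π : V →ₗ[R] V'} {f : Module.End R V} {g : Module.End R V'}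
    (h : π ∘ₗ f = g ∘ₗ π) (P : R[X]) : π ∘ₗ aeval f P = aeval g P ∘ₗ π := by
  induction P using Polynomial.induction_on' with
  | add P Q hP hQ => rw [map_add, map_add, LinearMap.comp_add, LinearMap.add_comp, hP, hQ]
  | monomial n r =>
    ext v
    have hn := LinearMap.congr_fun (Module.End.commute_pow_left_of_commute h.symm n) v
    simp only [LinearMap.comp_apply] at hn
    simp [aeval_monomial, hn]

theorem ker_aeval_le_comap (f : Module.End R V) (P : R[X]) :
    LinearMap.ker (aeval f P) ≤ (LinearMap.ker (aeval f P)).comap f := by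
  intro v hv
  have hcomm : f ∘ₗ aeval f P = aeval f P ∘ₗ f := comp_aeval_of_comp_eq rfl P
  rw [Submodule.mem_comap, LinearMap.mem_ker, ← LinearMap.comp_apply, ← hcomm,
    LinearMap.comp_apply, LinearMap.mem_ker.1 hv, map_zero]

variable {m n κ : Type*} [Fintype m] [DecidableEq m] [Fintype n] [DecidableEq n] {W : Submodule R V}
  {f : Module.End R V} {g : Module.End R (V ⧸ W)}

theorem toMatrix_sumQuot_inr_inl (bW : Module.Basis m R W) (bQ : Module.Basis n R (V ⧸ W))
    (h : W.mkQ ∘ₗ f = g ∘ₗ W.mkQ) (i : n) (i' : m) :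
    LinearMap.toMatrix (bW.sumQuot bQ) (bW.sumQuot bQ) f (.inr i) (.inl i') = 0 := by
  have hmk : W.mkQ (f (bW i')) = 0 := by
    rw [← LinearMap.comp_apply, h, LinearMap.comp_apply, Submodule.mkQ_apply,
      (Submodule.Quotient.mk_eq_zero W).2 (bW i').2, map_zero]
  simp [LinearMap.toMatrix_apply, hmk]

theorem toMatrix_sumQuot_inr_inr (bW : Module.Basis m R W) (bQ : Module.Basis n R (V ⧸ W))
    (h : W.mkQ ∘ₗ f = g ∘ₗ W.mkQ) (i i' : n) :
    LinearMap.toMatrix (bW.sumQuot bQ) (bW.sumQuot bQ) f (.inr i) (.inr i') =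
      LinearMap.toMatrix bQ bQ g i i' := by
  rw [LinearMap.toMatrix_apply, Module.Basis.sumQuot_repr_inr, ← LinearMap.comp_apply, h,
    LinearMap.comp_apply, Submodule.mkQ_apply, Module.Basis.sumQuot_inr, LinearMap.toMatrix_apply]

theorem blockTriangular_toMatrix_sumQuot [Preorder κ] (bW : Module.Basis m R W)
    (bQ : Module.Basis n R (V ⧸ W)) (h : W.mkQ ∘ₗ f = g ∘ₗ W.mkQ) {a : κ} {l : n → κ}
    (hal : ∀ i, a ≤ l i) (hg : (LinearMap.toMatrix bQ bQ g).BlockTriangular l) :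
    (LinearMap.toMatrix (bW.sumQuot bQ) (bW.sumQuot bQ) f).BlockTriangular
      (Sum.elim (fun _ => a) l) := by
  rintro (i | i) (i' | i') hlt
  · exact absurd hlt (lt_irrefl a)
  · exact absurd hlt (hal i').not_gt
  · exact toMatrix_sumQuot_inr_inl bW bQ h i i'
  · rw [toMatrix_sumQuot_inr_inr bW bQ h]
    exact hg hlt

theorem toSquareBlock_toMatrix_sumQuot_eq_zero (bW : Module.Basis m R W)
    (bQ : Module.Basis n R (V ⧸ W)) (h : W.mkQ ∘ₗ f = g ∘ₗ W.mkQ) {a j : κ} {l : n → κ}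
    (hal : ∀ i, a ≠ l i) (hW : a = j → W ≤ LinearMap.ker f)
    (hg : (LinearMap.toMatrix bQ bQ g).toSquareBlock l j = 0) :
    (LinearMap.toMatrix (bW.sumQuot bQ) (bW.sumQuot bQ) f).toSquareBlock
      (Sum.elim (fun _ => a) l) j = 0 := by
  ext ⟨i | i, hi⟩ ⟨i' | i', hi'⟩
  · have hker : f (bW i') = 0 := hW hi (bW i').2
    simp [toSquareBlock_def, LinearMap.toMatrix_apply, hker]
  · exact absurd (hi.trans hi'.symm) (hal i')
  · exact absurd (hi'.trans hi.symm) (hal i)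
  · rw [toSquareBlock_def, of_apply, toMatrix_sumQuot_inr_inr bW bQ h]
    exact congr_fun₂ hg ⟨i, hi⟩ ⟨i', hi'⟩

theorem aeval_eq_zero_of_comp_mkQ_ker {f : Module.End R V} {P Q : R[X]}
    {g : Module.End R (V ⧸ LinearMap.ker (aeval f P))}
    (hg : (LinearMap.ker (aeval f P)).mkQ ∘ₗ f = g ∘ₗ (LinearMap.ker (aeval f P)).mkQ)
    (h : aeval f (P * Q) = 0) : aeval g Q = 0 := by
  refine Submodule.linearMap_qext _ ?_
  rw [← comp_aeval_of_comp_eq hg Q, LinearMap.zero_comp]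
  ext v
  have hv : aeval f Q v ∈ LinearMap.ker (aeval f P) := by
    rw [LinearMap.mem_ker, ← Module.End.mul_apply, ← map_mul, h, LinearMap.zero_apply]
  exact (Submodule.Quotient.mk_eq_zero _).2 hv

end Quotient

section PrincipalIdealRing

variable {R V κ : Type*} [CommRing R] [IsDomain R] [IsPrincipalIdealRing R] [AddCommGroup V]
  [Module R V] [Module.Free R V] [Module.Finite R V] [LinearOrder κ]

theorem exists_basis_blockTriangular_of_aeval_prod_eq_zero (f : Module.End R V) (Q : κ → R[X])
    (s : Finset κ) (h : aeval f (∏ j ∈ s, Q j) = 0) :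
    ∃ (ι : Type) (_ : Fintype ι) (_ : DecidableEq ι) (b : Module.Basis ι R V) (k : ι → κ),
      (∀ i, k i ∈ s) ∧ (LinearMap.toMatrix b b f).BlockTriangular k ∧
        ∀ j, (LinearMap.toMatrix b b (aeval f (Q j))).toSquareBlock k j = 0 := by
  induction s using Finset.induction_on_min generalizing V with
  | empty =>
    have : Subsingleton V := by
      refine subsingleton_of_forall_eq 0 fun v => ?_
      simpa using LinearMap.congr_fun h v
    exact ⟨Empty, inferInstance, inferInstance, .empty V, isEmptyElim, isEmptyElim, isEmptyElim,
      fun j => Subsingleton.elim _ _⟩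
  | insert a s has ih =>
    rw [Finset.prod_insert fun ha => (has a ha).false] at h
    let W := LinearMap.ker (aeval f (Q a))
    let g := W.mapQ W f (ker_aeval_le_comap f (Q a))
    have hg : W.mkQ ∘ₗ f = g ∘ₗ W.mkQ := (Submodule.mapQ_mkQ ..).symm
    have : Module.Free R (V ⧸ W) := .of_equiv (aeval f (Q a)).quotKerEquivRange.symm
    obtain ⟨n, _, _, bQ, l, hls, hltri, hlzero⟩ := ih g (aeval_eq_zero_of_comp_mkQ_ker hg h)
    let bW := Module.finBasis R W
    refine ⟨_, inferInstance, inferInstance, bW.sumQuot bQ, Sum.elim (fun _ => a) l, ?_,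
      blockTriangular_toMatrix_sumQuot bW bQ hg (fun i => (has _ (hls i)).le) hltri, fun j =>
        toSquareBlock_toMatrix_sumQuot_eq_zero bW bQ (comp_aeval_of_comp_eq hg (Q j))
          (fun i => (has _ (hls i)).ne) ?_ (hlzero j)⟩
    · rintro (_ | i)
      · exact Finset.mem_insert_self a s
      · exact Finset.mem_insert_of_mem (hls i)
    · rintro rfl
      exact le_rfl

theorem exists_isUnit_conj_blockTriangular_of_aeval_prod_eq_zero [Fintype κ] {n : ℕ}
    (M : Matrix (Fin n) (Fin n) R) (Q : κ → R[X]) (h : aeval M (∏ j, Q j) = 0) :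
    ∃ U : Matrix (Fin n) (Fin n) R, IsUnit U ∧ ∃ k : Fin n → κ, Monotone k ∧
      (U * M * U⁻¹).BlockTriangular k ∧
        ∀ j, aeval ((U * M * U⁻¹).toSquareBlock k j) (Q j) = 0 := by
  have hM (P : R[X]) : toLin' (aeval M P) = aeval (toLin' M) P :=
    (aeval_algHom_apply (toLinAlgEquiv' (R := R) (n := Fin n)) M P).symm
  obtain ⟨ι, _, _, b, k, -, htri, hzero⟩ :=
    exists_basis_blockTriangular_of_aeval_prod_eq_zero (toLin' M) Q Finset.univ
      (by rw [← hM, h, map_zero])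
  let e₀ : Fin n ≃ ι := (Pi.basisFun R (Fin n)).indexEquiv b
  let e : Fin n ≃ ι := (Tuple.sort (k ∘ e₀)).trans e₀
  let b' := b.reindex e.symm
  have hreindex (g : Module.End R (Fin n → R)) :
      LinearMap.toMatrix b' b' g = (LinearMap.toMatrix b b g).submatrix e e := by
    ext i i'
    simp [b', LinearMap.toMatrix_apply]
  have htri' : (LinearMap.toMatrix b' b' (toLin' M)).BlockTriangular (k ∘ e) := by
    rw [hreindex]
    exact htri.submatrix
  refine ⟨b'.toMatrix (Pi.basisFun R (Fin n)), isUnit_toMatrix_basisFun b', k ∘ e,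
    Tuple.monotone_sort (k ∘ e₀), ?_⟩
  rw [toMatrix_basisFun_mul_mul_inv]
  refine ⟨htri', fun j => ?_⟩
  have haeval : aeval (LinearMap.toMatrix b' b' (toLin' M)) (Q j) =
      LinearMap.toMatrix b' b' (aeval (toLin' M) (Q j)) :=
    aeval_algHom_apply (LinearMap.toMatrixAlgEquiv b') (toLin' M) (Q j)
  rw [aeval_toSquareBlock htri', haeval, hreindex]
  ext ⟨i, hi⟩ ⟨i', hi'⟩
  exact congr_fun₂ (hzero j) ⟨e i, hi⟩ ⟨e i', hi'⟩

end PrincipalIdealRing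

theorem statement8_general {R K L β κ : Type*} [CommRing R] [IsDomain R] [IsPrincipalIdealRing R]
    [Field K] [Algebra R K] [IsFractionRing R K] [CommRing L] [IsDomain L] [Algebra R L]
    [Algebra K L] [IsScalarTower R K L] [LinearOrder κ] {n : ℕ}
    (M : Matrix (Fin n) (Fin n) R) (hsplits : (M.charpoly.map (algebraMap R L)).Splits)
    {a : L → β} (ha : ∀ x y, IsConjRoot K x y → a x = a y)
    {c : κ → β} (hc : Function.Injective c)
    (hall : ∀ x, (M.charpoly.map (algebraMap R L)).IsRoot x → ∃ j, a x = c j)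
    (hocc : ∀ j, ∃ x, (M.charpoly.map (algebraMap R L)).IsRoot x ∧ a x = c j) :
    ∃ U : Matrix (Fin n) (Fin n) R, IsUnit U ∧
      ∃ k : Fin n → κ, Monotone k ∧ Function.Surjective k ∧ (U * M * U⁻¹).BlockTriangular k ∧
        ∀ j x, (((U * M * U⁻¹).toSquareBlock k j).charpoly.map (algebraMap R L)).IsRoot x →
          a x = c j := by
  have := finite_of_forall_exists_isRoot ((charpoly_monic M).map _).ne_zero hc hocc
  have := Fintype.ofFinite κ
  obtain ⟨Q, hdvd, hQ⟩ :=
    exists_dvd_prod_of_isConjRoot_invariant (charpoly_monic M) hsplits ha hall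
  have hprod : aeval M (∏ j, Q j) = 0 :=
    aeval_eq_zero_of_dvd_aeval_eq_zero hdvd (aeval_self_charpoly M)
  obtain ⟨U, hU, k, hk, htri, hzero⟩ :=
    exists_isUnit_conj_blockTriangular_of_aeval_prod_eq_zero M Q hprod
  have hblock (j : κ) (x : L)
      (hx : (((U * M * U⁻¹).toSquareBlock k j).charpoly.map (algebraMap R L)).IsRoot x) :
      a x = c j :=
    hQ j x (isRoot_map_of_aeval_eq_zero _ (hzero j) hx)
  refine ⟨U, hU, k, hk, fun j => ?_, htri, hblock⟩
  obtain ⟨x, hx, hxj⟩ := hocc j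
  have hxU : ((U * M * U⁻¹).charpoly.map (algebraMap R L)).IsRoot x := by
    rwa [charpoly_mul_comm, ← mul_assoc,
      nonsing_inv_mul U ((isUnit_iff_isUnit_det U).1 hU), one_mul]
  obtain ⟨i, hi⟩ := exists_isRoot_charpoly_toSquareBlock _ htri hxU
  exact ⟨i, hc ((hblock (k i) x hi).symm.trans hxj)⟩

/-- Newton decomposition: if `ν_1 < ⋯ < ν_r` are the distinct valuations of
the eigenvalues of `M ∈ M_n(ℤ_p)` (so the absolute values `p^{-ν_j}` are the distinct
absolute values of the eigenvalues), then some `U ∈ GL_n(ℤ_p)` conjugates `M` into block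
upper triangular form with `r` diagonal blocks, the eigenvalues of the `j`-th block being
exactly those of valuation `ν_j`. -/
theorem statement8 {p : ℕ} [Fact p.Prime] {n r : ℕ}
    (M : Matrix (Fin n) (Fin n) ℤ_[p]) (ν : Fin r → ℝ) (hν : StrictMono ν)
    (hall : ∀ x : AlgebraicClosure ℚ_[p],
      (M.charpoly.map (padicToAlgClosure p)).IsRoot x →
        ∃ j, algAbs p x = (p : ℝ) ^ (-(ν j)))
    (hocc : ∀ j, ∃ x : AlgebraicClosure ℚ_[p],
      (M.charpoly.map (padicToAlgClosure p)).IsRoot x ∧ algAbs p x = (p : ℝ) ^ (-(ν j))) :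
    ∃ U : Matrix (Fin n) (Fin n) ℤ_[p], IsUnit U ∧
      ∃ k : Fin n → Fin r, Monotone k ∧ Function.Surjective k ∧
        (∀ i i' : Fin n, k i' < k i → (U * M * U⁻¹) i i' = 0) ∧
        ∀ j : Fin r, ∀ x : AlgebraicClosure ℚ_[p],
          ((Matrix.charpoly
              ((U * M * U⁻¹).submatrix
                (fun y : {i : Fin n // k i = j} => y.1)
                (fun y : {i : Fin n // k i = j} => y.1))).map
            (padicToAlgClosure p)).IsRoot x →
          algAbs p x = (p : ℝ) ^ (-(ν j)) := by
  have hp : 1 < (p : ℝ) := by exact_mod_cast (Fact.out : p.Prime).one_lt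
  -- `padicToAlgClosure p` unfolds to the `algebraMap` in `statement8_general`.
  exact statement8_general (K := ℚ_[p]) M (IsAlgClosed.splits _)
    (fun _ _ h => by simp only [algAbs, isConjRoot_def.1 h])
    ((Real.strictMono_rpow_of_base_gt_one hp).injective.comp
      (neg_injective.comp hν.injective)) hall hocc
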